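/- Let φ be a non-degenerate Schwartz function on ℝ with supp φ̂ ⊆ (0,1). Fix Φ ∈ 𝓢(ℝ) with supp Φ̂ ⊆ [−2,2] and Φ̂ ≡ 1 on [−3/2, 3/2], and let ψ_j (j ∈ ℤ) be the associated Littlewood–Paley blocks. Set h(u) = e^{2πiu} 𝟙_{[0,∞)}(u), f₀ = h∗ψ₀, and for m ≤ −2, φ_m(x) = 2^m e^{2πi(1+2^m)x} φ(2^m x). Then: (a) f₀∗ψ_j = 0 whenever |j| ≥ 2, and consequently for every s ≥ 0 and 0 < q ≤ ∞ the homogeneous Besov quasinorm ( Σ_{j∈ℤ} (2^{js} ‖f₀∗ψ_j‖_{L^∞})^q )^{1/q} is finite; (b) sup_{x∈ℝ} ( Σ_{m ≤ −2} |((f₀∗φ_m)∗ψ₀)(x)|² )^{1/2} = ∞. Hence the Rubio de Francia operator without rotations associated with the collection {[1+2^m, 1+2^{m+1}]}_{m ≤ −2} is not bounded on the homogeneous Besov space Ḃ^s_{∞q} for any s ≥ 0 and 0 < q ≤ ∞. -/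

import Mathlib

/-!
Convolving with an integrable `g` acts on the spectrum as multiplication by `𝓕 g`, and an
integrable function is determined almost everywhere by its Fourier transform. Since `ψ₀` and `ψ_j`
have disjoint spectra for `|j| ≥ 2`, only three blocks of `f₀ = h ∗ ψ₀` survive, which bounds every
Besov quasinorm. On the other hand `𝓕 ψ₀ = 1` on the spectrum `[1 + 2^m, 1 + 2^(m+1)]` of `φ_m` for
`m ≤ -2`, so `(f₀ ∗ φ_m) ∗ ψ₀ = h ∗ φ_m`, and a change of variables gives
`(h ∗ φ_m)(x) = e^{2πix} ∫_{-∞}^{2^m x} e^{2πit} φ(t) dt`. As `m → -∞` its modulus tends to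
`|∫_{-∞}^0 e^{2πit} φ(t) dt| ≠ 0`, so the square function is infinite at every point.
-/

open MeasureTheory Real Set Function
open scoped FourierTransform ENNReal NNReal

/-- `e2pi t = e^{2πit}`. -/
noncomputable def e2pi (t : ℝ) : ℂ := Complex.exp (2 * (Real.pi : ℂ) * Complex.I * (t : ℂ))

/-- Convolution of two functions on `ℝ`. -/
noncomputable def conv (f g : ℝ → ℂ) (x : ℝ) : ℂ := ∫ t, f t * g (x - t)

/-- The modulated Heaviside function `h(u) = e^{2πiu} 𝟙_{[0,∞)}(u)`. -/
noncomputable def heav : ℝ → ℂ := Set.indicator (Set.Ici (0:ℝ)) fun u => e2pi u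

/-- The function `φ_m` associated with the dyadic interval `[1+2^m, 1+2^{m+1}]`:
`φ_m(x) = 2^m e^{2πi(1+2^m)x} φ(2^m x)`. -/
noncomputable def phimDyadic (φ : ℝ → ℂ) (m : ℤ) (x : ℝ) : ℂ :=
  (((2:ℝ) ^ m : ℝ) : ℂ) * e2pi ((1 + (2:ℝ) ^ m) * x) * φ ((2:ℝ) ^ m * x)

/-- Littlewood–Paley block `ψ_j`, whose Fourier transform is `ξ ↦ 𝓕Φ(2^{-j}ξ) - 𝓕Φ(2^{-j+1}ξ)`. -/
noncomputable def psi (Φ : ℝ → ℂ) (j : ℤ) (x : ℝ) : ℂ :=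
  (((2:ℝ) ^ j : ℝ) : ℂ) * Φ ((2:ℝ) ^ j * x) - (((2:ℝ) ^ (j-1) : ℝ) : ℂ) * Φ ((2:ℝ) ^ (j-1) * x)

/-- The `ℓ^q` (quasi)norm of a sequence indexed by `ℤ`, with values in `[0,∞]`;
for `q = ∞` it is the supremum. -/
noncomputable def lqNorm (q : ℝ≥0∞) (F : ℤ → ℝ≥0∞) : ℝ≥0∞ :=
  if q = ∞ then ⨆ j, F j else (∑' j, F j ^ q.toReal) ^ (1 / q.toReal)

open Filter Topology Convolution

section FourierUniqueness

open scoped ContDiff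

variable {V F : Type*} [NormedAddCommGroup V] [InnerProductSpace ℝ V] [MeasurableSpace V]
  [BorelSpace V] [FiniteDimensional ℝ V] [NormedAddCommGroup F] [NormedSpace ℂ F]

lemma fourier_sub_of_integrable {f g : V → F} (hf : Integrable f) (hg : Integrable g) (ξ : V) :
    𝓕 (f - g) ξ = 𝓕 f ξ - 𝓕 g ξ := by
  simp only [Real.fourier_eq, Pi.sub_apply, smul_sub]
  exact integral_sub ((Real.fourierIntegral_convergent_iff ξ).2 hf)
    ((Real.fourierIntegral_convergent_iff ξ).2 hg)

variable [CompleteSpace F]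

lemma integral_schwartz_fourier_smul_eq {f : V → F} (hf : Integrable f) (g : SchwartzMap V ℂ) :
    ∫ x, 𝓕 g x • f x = ∫ ξ, g ξ • 𝓕 f ξ := by
  simpa [SchwartzMap.fourier_coe] using!
    VectorFourier.integral_fourierIntegral_smul_eq_flip (L := innerₗ V)
      Real.continuous_fourierChar continuous_inner g.integrable hf

lemma ae_eq_zero_of_fourier_eq_zero {f : V → F} (hf : Integrable f) (h : ∀ ξ, 𝓕 f ξ = 0) :
    f =ᵐ[volume] 0 := by
  refine ae_eq_zero_of_integral_contDiff_smul_eq_zero hf.locallyIntegrable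
    fun g g_smooth g_cpt => ?_
  have hcpt : HasCompactSupport (Complex.ofRealCLM ∘ g) := g_cpt.comp_left rfl
  have hsmooth : ContDiff ℝ ∞ (Complex.ofRealCLM ∘ g) := by fun_prop
  set G : SchwartzMap V ℂ := hcpt.toSchwartzMap hsmooth
  calc ∫ x, g x • f x = ∫ x, G x • f x := by simp [G]
    _ = ∫ x, 𝓕 (𝓕⁻ G) x • f x := by rw [FourierTransform.fourier_fourierInv_eq]
    _ = ∫ ξ, 𝓕⁻ G ξ • 𝓕 f ξ := integral_schwartz_fourier_smul_eq hf _
    _ = 0 := by simp [h]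

lemma ae_eq_of_fourier_eq {f g : V → F} (hf : Integrable f) (hg : Integrable g)
    (h : ∀ ξ, 𝓕 f ξ = 𝓕 g ξ) : f =ᵐ[volume] g :=
  (sub_ae_eq_zero f g).1 <| ae_eq_zero_of_fourier_eq_zero (hf.sub hg) fun ξ => by
    rw [fourier_sub_of_integrable hf hg, h, sub_self]

end FourierUniqueness

section Convolution

variable {f g k : ℝ → ℂ}

lemma conv_eq_convolution (f g : ℝ → ℂ) :
    conv f g = f ⋆[ContinuousLinearMap.mul ℂ ℂ, volume] g := rfl

lemma conv_congr_right (f : ℝ → ℂ) (h : g =ᵐ[volume] k) : conv f g = conv f k := by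
  simp only [conv_eq_convolution]
  exact convolution_congr _ .rfl h

lemma conv_zero_right (f : ℝ → ℂ) : conv f 0 = 0 := by
  rw [conv_eq_convolution, convolution_zero]

lemma integrable_conv (hf : Integrable f) (hg : Integrable g) : Integrable (conv f g) := by
  rw [conv_eq_convolution]
  exact hf.integrable_convolution _ hg

lemma fourier_conv (hf : Integrable f) (hg : Integrable g) (ξ : ℝ) :
    𝓕 (conv f g) ξ = 𝓕 f ξ * 𝓕 g ξ :=
  Real.fourier_mul_convolution_eq hf hg ξ

lemma norm_conv_le {C : ℝ} (hf : ∀ x, ‖f x‖ ≤ C) (hg : Integrable g) (x : ℝ) :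
    ‖conv f g x‖ ≤ C * ∫ t, ‖g t‖ := by
  calc ‖conv f g x‖ ≤ ∫ t, C * ‖g (x - t)‖ := by
        refine norm_integral_le_of_norm_le ((hg.comp_sub_left x).norm.const_mul C) (.of_forall ?_)
        intro t
        rw [norm_mul]
        gcongr
        exact hf t
    _ = C * ∫ t, ‖g t‖ := by
        rw [integral_const_mul, integral_sub_left_eq_self (fun t => ‖g t‖)]

lemma eLpNorm_top_conv_lt_top {C : ℝ} (hf : ∀ x, ‖f x‖ ≤ C) (hg : Integrable g) :
    eLpNorm (conv f g) ⊤ volume < ∞ := by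
  rw [eLpNorm_exponent_top]
  exact eLpNormEssSup_lt_top_of_ae_bound (.of_forall (norm_conv_le hf hg))

lemma conv_assoc_of_bounded {h : ℝ → ℂ} {C : ℝ} (hm : Measurable h) (hC : ∀ x, ‖h x‖ ≤ C)
    (hf : Integrable f) (hg : Integrable g) : conv (conv h f) g = conv h (conv f g) := by
  funext x₀
  have h_triple : Integrable (fun p : ℝ × ℝ => f (p.1 - p.2) * g (x₀ - p.1)) := by
    refine ((hg.comp_sub_left x₀).convolution_integrand (ContinuousLinearMap.mul ℂ ℂ)
      (ν := volume) hf.comp_neg).swap.congr (.of_forall fun p => ?_)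
    simp [mul_comm]
  simp only [conv_eq_convolution]
  refine convolution_assoc' _ _ _ _ (fun x y z => by simp [mul_assoc]) ?_
    (hf.ae_convolution_exists _ hg) ?_
  · exact .of_forall fun y =>
      (hf.comp_sub_left y).bdd_mul hm.aestronglyMeasurable (.of_forall hC)
  · exact h_triple.bdd_mul (hm.comp measurable_snd).aestronglyMeasurable
      (.of_forall fun p => hC p.2)

lemma conv_ae_eq_zero_of_disjoint (hf : Integrable f) (hg : Integrable g)
    (h : Disjoint (support (𝓕 f)) (support (𝓕 g))) : conv f g =ᵐ[volume] 0 :=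
  ae_eq_zero_of_fourier_eq_zero (integrable_conv hf hg) fun ξ => by
    rw [fourier_conv hf hg, mul_eq_zero, or_iff_not_imp_left]
    exact fun hξ => notMem_support.1 (h.notMem_of_mem_left hξ)

lemma conv_conv_ae_eq_of_fourier_eq_one (hf : Integrable f) (hg : Integrable g)
    (h : ∀ ξ ∈ support (𝓕 g), 𝓕 f ξ = 1) : conv (conv f g) f =ᵐ[volume] g := by
  have hfg := integrable_conv hf hg
  refine ae_eq_of_fourier_eq (integrable_conv hfg hf) hg fun ξ => ?_
  rw [fourier_conv hfg hf, fourier_conv hf hg]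
  by_cases hξ : 𝓕 g ξ = 0
  · simp [hξ]
  · simp [h ξ hξ]

end Convolution

lemma norm_e2pi (t : ℝ) : ‖e2pi t‖ = 1 := by
  simp [e2pi, Complex.norm_exp]

lemma continuous_e2pi : Continuous e2pi := by
  unfold e2pi
  fun_prop

lemma e2pi_add (s t : ℝ) : e2pi (s + t) = e2pi s * e2pi t := by
  rw [e2pi, e2pi, e2pi, ← Complex.exp_add]
  push_cast
  ring_nf

lemma measurable_heav : Measurable heav :=
  continuous_e2pi.measurable.indicator measurableSet_Ici

lemma norm_heav_le_one (t : ℝ) : ‖heav t‖ ≤ 1 :=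
  (norm_indicator_le_norm_self _ _).trans (norm_e2pi t).le

lemma integrable_e2pi_mul {f : ℝ → ℂ} (hf : Integrable f) : Integrable fun t => e2pi t * f t :=
  hf.bdd_mul continuous_e2pi.aestronglyMeasurable (.of_forall fun t => (norm_e2pi t).le)

section ModulatedDilate

/-- The `L¹`-normalised dilate of `f` by `a`, modulated to the frequency `b`; both `phimDyadic` and
the two terms of `psi` are of this form. -/
noncomputable def modDilate (a b : ℝ) (f : ℝ → ℂ) (x : ℝ) : ℂ :=
  (a : ℂ) * e2pi (b * x) * f (a * x)

variable {a : ℝ} {f : ℝ → ℂ}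

lemma integrable_modDilate (ha : a ≠ 0) (b : ℝ) (hf : Integrable f) :
    Integrable (modDilate a b f) := by
  refine (hf.comp_mul_left' ha).bdd_mul (c := |a|) (Continuous.aestronglyMeasurable ?_)
    (.of_forall fun x => ?_)
  · exact continuous_const.mul (continuous_e2pi.comp (continuous_const_mul b))
  · simp [norm_e2pi]

lemma integral_mul_comp_mul_left (ha : 0 < a) (f : ℝ → ℂ) :
    ∫ x, (a : ℂ) * f (a * x) = ∫ x, f x := by
  rw [integral_const_mul, Measure.integral_comp_mul_left, abs_of_pos (inv_pos.2 ha),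
    Complex.real_smul, ← mul_assoc, ← Complex.ofReal_mul, mul_inv_cancel₀ ha.ne',
    Complex.ofReal_one, one_mul]

lemma fourier_modDilate (ha : 0 < a) (b : ℝ) (f : ℝ → ℂ) (ξ : ℝ) :
    𝓕 (modDilate a b f) ξ = 𝓕 f ((ξ - b) / a) := by
  rw [Real.fourier_real_eq_integral_exp_smul, Real.fourier_real_eq_integral_exp_smul]
  refine (integral_congr_ae (.of_forall fun v => ?_)).trans (integral_mul_comp_mul_left ha
    fun v : ℝ => Complex.exp (↑(-2 * π * v * ((ξ - b) / a)) * Complex.I) • f v)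
  have h_exp : Complex.exp (↑(-2 * π * (a * v) * ((ξ - b) / a)) * Complex.I) =
      Complex.exp (↑(-2 * π * v * ξ) * Complex.I) * e2pi (b * v) := by
    have h_arg : -2 * π * (a * v) * ((ξ - b) / a) = -2 * π * v * ξ + 2 * π * (b * v) := by
      field_simp
      ring
    rw [h_arg, e2pi, ← Complex.exp_add]
    push_cast
    ring_nf
  simp only [h_exp, modDilate, smul_eq_mul]
  ring

lemma heav_mul_modDilate_sub (ha : 0 < a) (f : ℝ → ℂ) (x t : ℝ) :
    heav t * modDilate a (1 + a) f (x - t) =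
      e2pi x * (a * (Iic (a * x)).indicator (fun u => e2pi u * f u) (a * (x - t))) := by
  have h_mem : a * (x - t) ∈ Iic (a * x) ↔ t ∈ Ici 0 := by
    rw [mem_Iic, mem_Ici, mul_le_mul_iff_right₀ ha, sub_le_self_iff]
  by_cases ht : t ∈ Ici (0 : ℝ)
  · have h_phase : e2pi t * e2pi ((1 + a) * (x - t)) = e2pi x * e2pi (a * (x - t)) := by
      rw [← e2pi_add, ← e2pi_add]
      ring_nf
    rw [heav, indicator_of_mem ht, indicator_of_mem (h_mem.2 ht), modDilate]
    linear_combination (a * f (a * (x - t))) * h_phase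
  · rw [heav, indicator_of_notMem ht, indicator_of_notMem (h_mem.not.2 ht)]
    simp

lemma conv_heav_modDilate (ha : 0 < a) (f : ℝ → ℂ) (x : ℝ) :
    conv heav (modDilate a (1 + a) f) x = e2pi x * ∫ t in Iic (a * x), e2pi t * f t := by
  set G := (Iic (a * x)).indicator fun u => e2pi u * f u with hG
  calc conv heav (modDilate a (1 + a) f) x = ∫ t, e2pi x * (a * G (a * (x - t))) :=
        integral_congr_ae (.of_forall fun t => heav_mul_modDilate_sub ha f x t)
    _ = e2pi x * ∫ t, (a : ℂ) * G (a * t) := by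
        rw [integral_const_mul, integral_sub_left_eq_self (fun t => (a : ℂ) * G (a * t))]
    _ = e2pi x * ∫ t in Iic (a * x), e2pi t * f t := by
        rw [integral_mul_comp_mul_left ha, hG, integral_indicator measurableSet_Iic]

end ModulatedDilate

section LittlewoodPaley

/-- The low-frequency cutoffs `Φ` from which the Littlewood–Paley blocks `psi Φ j` are built; of the
Schwartz class only integrability is kept. -/
structure IsLittlewoodPaleyCutoff (Φ : ℝ → ℂ) : Prop where
  integrable : Integrable Φ
  support_fourier_subset : support (𝓕 Φ) ⊆ Icc (-2) 2
  fourier_eq_one : ∀ ξ ∈ Icc (-(3 / 2) : ℝ) (3 / 2), 𝓕 Φ ξ = 1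

variable {Φ : ℝ → ℂ}

lemma psi_eq_sub (Φ : ℝ → ℂ) (j : ℤ) :
    psi Φ j = modDilate (2 ^ j) 0 Φ - modDilate (2 ^ (j - 1)) 0 Φ := by
  funext x
  simp [psi, modDilate, e2pi]

lemma integrable_psi (hΦ : Integrable Φ) (j : ℤ) : Integrable (psi Φ j) := by
  rw [psi_eq_sub]
  exact (integrable_modDilate (by positivity) 0 hΦ).sub (integrable_modDilate (by positivity) 0 hΦ)

lemma fourier_psi (hΦ : Integrable Φ) (j : ℤ) (ξ : ℝ) :
    𝓕 (psi Φ j) ξ = 𝓕 Φ (ξ / 2 ^ j) - 𝓕 Φ (2 * (ξ / 2 ^ j)) := by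
  have h_half : ξ / 2 ^ (j - 1) = 2 * (ξ / 2 ^ j) := by
    rw [zpow_sub_one₀ two_ne_zero]
    field_simp
  rw [psi_eq_sub, fourier_sub_of_integrable (integrable_modDilate (by positivity) 0 hΦ)
    (integrable_modDilate (by positivity) 0 hΦ), fourier_modDilate (by positivity),
    fourier_modDilate (by positivity), sub_zero, h_half]

lemma IsLittlewoodPaleyCutoff.support_fourier_psi_subset (hΦ : IsLittlewoodPaleyCutoff Φ) (j : ℤ) :
    support (𝓕 (psi Φ j)) ⊆ {ξ | |ξ| ∈ Ioc (3 / 4 * 2 ^ j : ℝ) (2 * 2 ^ j)} := by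
  intro ξ hξ
  have hpos : (0 : ℝ) < 2 ^ j := by positivity
  have habs : |ξ| = |ξ / 2 ^ j| * 2 ^ j := by
    rw [abs_div, abs_of_pos hpos, div_mul_cancel₀ _ hpos.ne']
  have habs_two : |2 * (ξ / 2 ^ j)| = 2 * |ξ / 2 ^ j| := by rw [abs_mul, abs_two]
  rw [mem_support, fourier_psi hΦ.integrable] at hξ
  rw [mem_ofPred_eq, habs]
  refine ⟨mul_lt_mul_of_pos_right ?_ hpos, mul_le_mul_of_nonneg_right ?_ hpos.le⟩ <;>
    contrapose! hξ
  · rw [hΦ.fourier_eq_one _ (abs_le.1 (by linarith)),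
      hΦ.fourier_eq_one _ (abs_le.1 (by linarith)), sub_self]
  · have hzero : ∀ η : ℝ, 2 < |η| → 𝓕 Φ η = 0 := fun η hη =>
      notMem_support.1 fun hmem => hη.not_ge (abs_le.2 (hΦ.support_fourier_subset hmem))
    rw [hzero _ hξ, hzero _ (by linarith), sub_self]

lemma IsLittlewoodPaleyCutoff.fourier_psi_eq_one (hΦ : IsLittlewoodPaleyCutoff Φ) {j : ℤ} {ξ : ℝ}
    (hξ : |ξ| ∈ Ioc (2 ^ j : ℝ) (3 / 2 * 2 ^ j)) : 𝓕 (psi Φ j) ξ = 1 := by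
  have hpos : (0 : ℝ) < 2 ^ j := by positivity
  have habs : |ξ / 2 ^ j| = |ξ| / 2 ^ j := by rw [abs_div, abs_of_pos hpos]
  have hlow : 1 < |ξ / 2 ^ j| := by rw [habs, one_lt_div hpos]; exact hξ.1
  have hhigh : |ξ / 2 ^ j| ≤ 3 / 2 := by rw [habs, div_le_iff₀ hpos]; exact hξ.2
  have hdouble : 𝓕 Φ (2 * (ξ / 2 ^ j)) = 0 := notMem_support.1 fun hmem => by
    have := abs_le.2 (hΦ.support_fourier_subset hmem)
    rw [abs_mul, abs_two] at this
    linarith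
  rw [fourier_psi hΦ.integrable, hdouble, hΦ.fourier_eq_one _ (abs_le.1 hhigh), sub_zero]

lemma four_mul_two_zpow_le {j k : ℤ} (h : j + 2 ≤ k) : (4 : ℝ) * 2 ^ j ≤ 2 ^ k := by
  calc (4 : ℝ) * 2 ^ j = 2 ^ (j + 2) := by rw [zpow_add₀ two_ne_zero]; norm_num; ring
    _ ≤ 2 ^ k := zpow_le_zpow_right₀ one_le_two h

lemma conv_psi_psi_ae_eq_zero (hΦ : IsLittlewoodPaleyCutoff Φ) {j k : ℤ} (hjk : 2 ≤ |j - k|) :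
    conv (psi Φ j) (psi Φ k) =ᵐ[volume] 0 := by
  refine conv_ae_eq_zero_of_disjoint (integrable_psi hΦ.integrable j)
    (integrable_psi hΦ.integrable k) (disjoint_left.2 fun ξ hξj hξk => ?_)
  obtain ⟨hj_low, hj_high⟩ := hΦ.support_fourier_psi_subset j hξj
  obtain ⟨hk_low, hk_high⟩ := hΦ.support_fourier_psi_subset k hξk
  rcases le_abs.1 hjk with h | h
  · linarith [four_mul_two_zpow_le (show k + 2 ≤ j by lia), zpow_pos (two_pos (α := ℝ)) k]
  · linarith [four_mul_two_zpow_le (show j + 2 ≤ k by lia), zpow_pos (two_pos (α := ℝ)) j]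

lemma conv_conv_psi_psi_eq_zero {h : ℝ → ℂ} {C : ℝ} (hm : Measurable h) (hC : ∀ x, ‖h x‖ ≤ C)
    (hΦ : IsLittlewoodPaleyCutoff Φ) {j k : ℤ} (hjk : 2 ≤ |j - k|) :
    conv (conv h (psi Φ j)) (psi Φ k) = 0 := by
  rw [conv_assoc_of_bounded hm hC (integrable_psi hΦ.integrable j) (integrable_psi hΦ.integrable k),
    conv_congr_right h (conv_psi_psi_ae_eq_zero hΦ hjk), conv_zero_right]

end LittlewoodPaley

lemma tsum_lt_top_of_finite_support {ι : Type*} {F : ι → ℝ≥0∞} (hF : ∀ i, F i < ∞)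
    (hfin : (support F).Finite) : ∑' i, F i < ∞ := by
  rw [tsum_eq_sum (s := hfin.toFinset) (by simp)]
  exact ENNReal.sum_lt_top.2 fun i _ => hF i

lemma lqNorm_lt_top_of_finite_support {q : ℝ≥0∞} (hq : 0 < q) {F : ℤ → ℝ≥0∞}
    (hF : ∀ j, F j < ∞) (hfin : (support F).Finite) : lqNorm q F < ∞ := by
  unfold lqNorm
  split_ifs with hq_top
  · exact (iSup_le ENNReal.le_tsum).trans_lt (tsum_lt_top_of_finite_support hF hfin)
  · have hq_pos : 0 < q.toReal := ENNReal.toReal_pos hq.ne' hq_top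
    have hpow_fin : (support fun j => F j ^ q.toReal).Finite :=
      hfin.subset fun j hj hFj => hj (by simp [hFj, hq_pos])
    refine ENNReal.rpow_lt_top_of_nonneg (by positivity)
      (tsum_lt_top_of_finite_support (fun j => ?_) hpow_fin).ne
    exact ENNReal.rpow_lt_top_of_nonneg hq_pos.le (hF j).ne

lemma lqNorm_besov_lt_top {q : ℝ≥0∞} (hq : 0 < q) (s : ℝ) {g : ℤ → ℝ → ℂ}
    (hbdd : ∀ j, eLpNorm (g j) ⊤ volume < ∞) (hzero : ∀ j, 2 ≤ |j| → g j = 0) :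
    lqNorm q (fun j => (2 : ℝ≥0∞) ^ ((j : ℝ) * s) * eLpNorm (g j) ⊤ volume) < ∞ := by
  refine lqNorm_lt_top_of_finite_support hq (fun j => ?_)
    ((finite_Icc (-1) 1).subset fun j hj => ?_)
  · exact ENNReal.mul_lt_top (ENNReal.rpow_ne_top_of_ne_zero (by simp) (by simp)).lt_top (hbdd j)
  · rw [mem_Icc, ← abs_le]
    by_contra! hlt
    exact hj (by simp [hzero j hlt])

section DyadicPieces

variable {φ Φ : ℝ → ℂ}

lemma phimDyadic_eq_modDilate (φ : ℝ → ℂ) (m : ℤ) :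
    phimDyadic φ m = modDilate (2 ^ m) (1 + 2 ^ m) φ := rfl

lemma support_fourier_phimDyadic_subset (hφ : support (𝓕 φ) ⊆ Ioo 0 1) (m : ℤ) :
    support (𝓕 (phimDyadic φ m)) ⊆ Ioo (1 + 2 ^ m) (1 + 2 ^ (m + 1)) := by
  intro ξ hξ
  have hpos : (0 : ℝ) < 2 ^ m := by positivity
  rw [mem_support, phimDyadic_eq_modDilate, fourier_modDilate hpos] at hξ
  obtain ⟨hlow, hhigh⟩ := hφ hξ
  rw [lt_div_iff₀ hpos] at hlow
  rw [div_lt_iff₀ hpos] at hhigh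
  constructor
  · linarith
  · rw [zpow_add_one₀ two_ne_zero]
    linarith

lemma conv_psi_phimDyadic_psi_ae_eq (hφ : Integrable φ) (hφsupp : support (𝓕 φ) ⊆ Ioo 0 1)
    (hΦ : IsLittlewoodPaleyCutoff Φ) {m : ℤ} (hm : m ≤ -2) :
    conv (conv (psi Φ 0) (phimDyadic φ m)) (psi Φ 0) =ᵐ[volume] phimDyadic φ m := by
  refine conv_conv_ae_eq_of_fourier_eq_one (integrable_psi hΦ.integrable 0)
    (integrable_modDilate (by positivity) _ hφ) fun ξ hξ => hΦ.fourier_psi_eq_one ?_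
  obtain ⟨hlow, hhigh⟩ := support_fourier_phimDyadic_subset hφsupp m hξ
  have hpos : (0 : ℝ) < 2 ^ m := by positivity
  have hle : (2 : ℝ) ^ (m + 1) ≤ 2 ^ (-1 : ℤ) := zpow_le_zpow_right₀ one_le_two (by lia)
  rw [abs_of_pos (by linarith), zpow_zero]
  constructor <;> norm_num at hle ⊢ <;> linarith

lemma conv_heav_psi_phimDyadic_psi (hφ : Integrable φ) (hφsupp : support (𝓕 φ) ⊆ Ioo 0 1)
    (hΦ : IsLittlewoodPaleyCutoff Φ) {m : ℤ} (hm : m ≤ -2) (x : ℝ) :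
    conv (conv (conv heav (psi Φ 0)) (phimDyadic φ m)) (psi Φ 0) x =
      e2pi x * ∫ t in Iic (2 ^ m * x), e2pi t * φ t := by
  have hψ := integrable_psi hΦ.integrable 0
  have hφm : Integrable (phimDyadic φ m) := integrable_modDilate (by positivity) _ hφ
  rw [conv_assoc_of_bounded measurable_heav norm_heav_le_one hψ hφm,
    conv_assoc_of_bounded measurable_heav norm_heav_le_one (integrable_conv hψ hφm) hψ,
    conv_congr_right _ (conv_psi_phimDyadic_psi_ae_eq hφ hφsupp hΦ hm),
    phimDyadic_eq_modDilate, conv_heav_modDilate (by positivity)]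

end DyadicPieces

lemma continuous_setIntegral_Iic {E : Type*} [NormedAddCommGroup E] [NormedSpace ℝ E] {f : ℝ → E}
    (hf : Integrable f) : Continuous fun y => ∫ t in Iic y, f t := by
  have h_primitive : ∀ y, ∫ t in Iic y, f t = (∫ t in Iic 0, f t) + ∫ t in (0 : ℝ)..y, f t :=
    fun y => by
      rw [← intervalIntegral.integral_Iic_sub_Iic hf.integrableOn hf.integrableOn,
        add_sub_cancel]
  rw [funext h_primitive]
  exact continuous_const.add
    (intervalIntegral.continuous_primitive (fun _ _ => hf.intervalIntegrable) 0)

lemma tsum_eq_top_of_tendsto_cofinite {ι : Type*} [Infinite ι] {F : ι → ℝ≥0∞} {c : ℝ≥0∞}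
    (hF : Tendsto F cofinite (𝓝 c)) (hc : c ≠ 0) : ∑' i, F i = ∞ := by
  by_contra hne
  exact hc (tendsto_nhds_unique hF (ENNReal.tendsto_cofinite_zero_of_tsum_ne_top hne))

lemma tendsto_two_zpow_cofinite (k : ℤ) :
    Tendsto (fun m : {m : ℤ // m ≤ k} => (2 : ℝ) ^ (m : ℤ)) cofinite (𝓝 0) := by
  have h_val : Tendsto (Subtype.val : {m : ℤ // m ≤ k} → ℤ) cofinite atBot :=
    tendsto_atBot.2 fun b => ((finite_Ioc b k).preimage Subtype.val_injective.injOn).subset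
      fun m hm => ⟨not_le.1 hm, m.2⟩
  have h_zpow : Tendsto (fun m : ℤ => (2 : ℝ) ^ m) atBot (𝓝 0) := by
    simpa only [comp_def, id_eq, rpow_intCast] using
      (tendsto_rpow_atBot_of_base_gt_one 2 one_lt_two).comp (tendsto_intCast_atBot_iff.2 tendsto_id)
  exact h_zpow.comp h_val

lemma tsum_nnnorm_conv_sq_eq_top {φ Φ : ℝ → ℂ} (hφ : Integrable φ)
    (hφsupp : support (𝓕 φ) ⊆ Ioo 0 1)
    (hnd : (∫ t in Iic (0 : ℝ), e2pi t * φ t) ≠ 0)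
    (hΦ : IsLittlewoodPaleyCutoff Φ) (x : ℝ) :
    ∑' m : {m : ℤ // m ≤ -2},
      (‖conv (conv (conv heav (psi Φ 0)) (phimDyadic φ (m : ℤ))) (psi Φ 0) x‖₊ : ℝ≥0∞) ^ 2 = ∞ := by
  set I : ℝ → ℂ := fun y => ∫ t in Iic y, e2pi t * φ t
  have : Infinite {m : ℤ // m ≤ -2} := infinite_coe_iff.2 (Iic_infinite (-2))
  have h_term : ∀ m : {m : ℤ // m ≤ -2},
      ‖conv (conv (conv heav (psi Φ 0)) (phimDyadic φ (m : ℤ))) (psi Φ 0) x‖₊ =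
        ‖I (2 ^ (m : ℤ) * x)‖₊ := fun m => by
    rw [conv_heav_psi_phimDyadic_psi hφ hφsupp hΦ m.2, nnnorm_mul,
      show ‖e2pi x‖₊ = 1 from NNReal.eq (norm_e2pi x), one_mul]
  have h_arg : Tendsto (fun m : {m : ℤ // m ≤ -2} => (2 : ℝ) ^ (m : ℤ) * x) cofinite (𝓝 0) := by
    simpa only [zero_mul] using (tendsto_two_zpow_cofinite (-2)).mul_const x
  have h_cont : Continuous fun y => (‖I y‖₊ : ℝ≥0∞) ^ 2 :=
    (ENNReal.continuous_pow 2).comp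
      (continuous_setIntegral_Iic (integrable_e2pi_mul hφ)).enorm
  simp only [h_term]
  exact tsum_eq_top_of_tendsto_cofinite ((h_cont.tendsto 0).comp h_arg) (by simpa [I] using hnd)

theorem statement19_general {φ Φ : ℝ → ℂ} (hφ : Integrable φ)
    (hφsupp : support (𝓕 φ) ⊆ Ioo 0 1)
    (hnd : (∫ t in Iic (0 : ℝ), e2pi t * φ t) ≠ 0)
    (hΦ : IsLittlewoodPaleyCutoff Φ) :
    ((∀ j : ℤ, 2 ≤ |j| → ∀ x : ℝ, conv (conv heav (psi Φ 0)) (psi Φ j) x = 0) ∧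
      ∀ s : ℝ, ∀ q : ℝ≥0∞, 0 < q →
        lqNorm q (fun j : ℤ => (2 : ℝ≥0∞) ^ ((j : ℝ) * s) *
          eLpNorm (conv (conv heav (psi Φ 0)) (psi Φ j)) ⊤ volume) < ∞) ∧
    ∀ x : ℝ, (∑' m : {m : ℤ // m ≤ -2},
        (‖conv (conv (conv heav (psi Φ 0)) (phimDyadic φ (m : ℤ))) (psi Φ 0) x‖₊ : ℝ≥0∞) ^ 2)
          ^ (1 / 2 : ℝ) = ∞ := by
  have hzero : ∀ j : ℤ, 2 ≤ |j| → conv (conv heav (psi Φ 0)) (psi Φ j) = 0 := fun j hj =>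
    conv_conv_psi_psi_eq_zero measurable_heav norm_heav_le_one hΦ (by simpa using hj)
  refine ⟨⟨fun j hj => congrFun (hzero j hj), fun s q hq => ?_⟩, fun x => ?_⟩
  · exact lqNorm_besov_lt_top hq s (fun j => eLpNorm_top_conv_lt_top (norm_conv_le norm_heav_le_one
      (integrable_psi hΦ.integrable 0)) (integrable_psi hΦ.integrable j)) hzero
  · rw [tsum_nnnorm_conv_sq_eq_top hφ hφsupp hnd hΦ x, ENNReal.top_rpow_of_pos one_half_pos]

/-- let `φ` be a non-degenerate Schwartz function with `supp 𝓕φ ⊆ (0,1)` and let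
`Φ` be Schwartz with `supp 𝓕Φ ⊆ [-2,2]` and `𝓕Φ ≡ 1` on `[-3/2,3/2]`, with Littlewood–Paley
blocks `ψ_j`, and set `f₀ = h∗ψ₀`. Then (a) `f₀∗ψ_j = 0` for `|j| ≥ 2`, and the homogeneous
Besov quasinorm of `f₀` with indices `(∞, q, s)` is finite for all `s ≥ 0`, `0 < q ≤ ∞`;
(b) `sup_x (Σ_{m ≤ -2} |((f₀∗φ_m)∗ψ₀)(x)|²)^{1/2} = ∞`. -/
theorem statement19 (φ : SchwartzMap ℝ ℂ)
    (hφ : Function.support (𝓕 ⇑φ) ⊆ Set.Ioo 0 1)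
    (hnd : (∫ t in Set.Iic (0:ℝ), e2pi t * φ t) ≠ 0)
    (Φ : SchwartzMap ℝ ℂ)
    (hΦsupp : Function.support (𝓕 ⇑Φ) ⊆ Set.Icc (-2) 2)
    (hΦone : ∀ ξ ∈ Set.Icc (-(3/2) : ℝ) (3/2), 𝓕 ⇑Φ ξ = 1) :
    ((∀ j : ℤ, 2 ≤ |j| → ∀ x : ℝ, conv (conv heav (psi ⇑Φ 0)) (psi ⇑Φ j) x = 0) ∧
      ∀ s : ℝ, 0 ≤ s → ∀ q : ℝ≥0∞, 0 < q →
        lqNorm q (fun j : ℤ => (2 : ℝ≥0∞) ^ ((j : ℝ) * s) *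
          eLpNorm (conv (conv heav (psi ⇑Φ 0)) (psi ⇑Φ j)) ⊤ volume) < ∞) ∧
    (⨆ x : ℝ, (∑' m : {m : ℤ // m ≤ -2},
        (‖conv (conv (conv heav (psi ⇑Φ 0)) (phimDyadic ⇑φ (m : ℤ))) (psi ⇑Φ 0) x‖₊ : ℝ≥0∞) ^ 2)
          ^ (1/2 : ℝ)) = ∞ := by
  obtain ⟨⟨hzero, hbesov⟩, hsquare⟩ :=
    statement19_general φ.integrable hφ hnd ⟨Φ.integrable, hΦsupp, hΦone⟩
  exact ⟨⟨hzero, fun s _ => hbesov s⟩, by simp only [hsquare, ciSup_const]⟩
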